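/- Let ⟨λ,ν⟩ and ⟨λ',ν'⟩ be reduced marked partitions of type X of the same integer n such that λ ≤ λ' in dominance order and d_S⟨λ,ν⟩ ≥ d_S⟨λ',ν'⟩ in dominance order. Suppose ⟨λ',ν'⟩ is special and ⟨λ,ν⟩ is not special. Then, with ζ the partition produced by the partial specialization at ⟨λ,ν⟩ (obtained from λ by replacing the l copies of the distinguished part a by a+1, a (l−2 times), a−1), one has ζ ≤ λ' in dominance order. -/

import Mathlib

namespace NilDual

/-- A "partition" is encoded as a multiset of natural numbers (its parts). -/
abbrev Ptn := Multiset ℕ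

/-- All parts are positive. -/
def IsPartition (l : Ptn) : Prop := ∀ a ∈ l, 0 < a

/-- `height l a` is the number of parts of `l` that are ≥ `a`. -/
def height (l : Ptn) (a : ℕ) : ℕ := Multiset.card (l.filter (fun p => a ≤ p))

/-- `psum l j` is the sum of the `j` largest parts of `l`. -/
def psum (l : Ptn) (j : ℕ) : ℕ := ∑ a ∈ Finset.Icc 1 l.sum, min j (height l a)

/-- `Dom l m` means `l ≤ m` in the dominance order. -/
def Dom (l m : Ptn) : Prop := ∀ j : ℕ, psum l j ≤ psum m j

/-- The transpose (conjugate) partition. -/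
def transpose (l : Ptn) : Ptn :=
  Multiset.filter (fun x => 0 < x)
    (Multiset.map (fun a => height l a) (Finset.Icc 1 l.sum).val)

/-- The largest part (0 for the empty partition). -/
def maxPart (l : Ptn) : ℕ := l.sup

/-- The smallest part (0 for the empty partition). -/
noncomputable def minPart (l : Ptn) : ℕ := sInf {a : ℕ | a ∈ l}

/-- `λ⁺`: add 1 to the largest part. -/
def up (l : Ptn) : Ptn := (maxPart l + 1) ::ₘ l.erase (maxPart l)

/-- `λ⁻`: subtract 1 from the smallest part, deleting it if it becomes 0. -/
noncomputable def down (l : Ptn) : Ptn :=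
  if minPart l ≤ 1 then l.erase (minPart l)
  else (minPart l - 1) ::ₘ l.erase (minPart l)

/-- The join `λ ∨ μ = (λ* ∪ μ*)*`. -/
def pjoin (l m : Ptn) : Ptn := transpose (transpose l + transpose m)

/-- `λ₋ = (λ*⁻)*`. -/
noncomputable def lowerStar (l : Ptn) : Ptn := transpose (down (transpose l))

inductive PType | B | C | D
deriving DecidableEq

/-- Parts of this parity must occur with even multiplicity in a partition of type `X`. -/
def badPart : PType → ℕ → Prop
  | PType.B, a => Even a
  | PType.C, a => Odd a
  | PType.D, a => Even a

/-- Membership in `𝒫_X` (sum unconstrained). -/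
def InP (X : PType) (l : Ptn) : Prop :=
  IsPartition l ∧ ∀ a : ℕ, badPart X a → Even (l.count a)

/-- The parity of `n` required for `𝒫_X(n)` to be defined. -/
def sumParity : PType → ℕ → Prop
  | PType.B, n => Odd n
  | PType.C, n => Even n
  | PType.D, n => Even n

/-- `m` is the X-collapse of `l`: `m ∈ 𝒫_X(|l|)`, `m ≤ l` in dominance order, and `m`
dominates every member of `𝒫_X(|l|)` that is dominated by `l`. -/
def IsCollapse (X : PType) (l m : Ptn) : Prop :=
  InP X m ∧ m.sum = l.sum ∧ Dom m l ∧
    ∀ ν : Ptn, InP X ν → ν.sum = l.sum → Dom ν l → Dom ν m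

def CollapseDefined (X : PType) (l : Ptn) : Prop := ∃ m, IsCollapse X l m

open Classical in
/-- The X-collapse `λ_X` (junk value `0` if it does not exist). -/
noncomputable def collapse (X : PType) (l : Ptn) : Ptn :=
  if h : CollapseDefined X l then h.choose else 0

/-- `l` is superior to `m`: smallest part of `l` ≥ largest part of `m`. -/
def Superior (l m : Ptn) : Prop := maxPart m ≤ minPart l

def EvenlySuperior (l m : Ptn) : Prop := ∃ k : ℕ, Even k ∧ maxPart m ≤ k ∧ k ≤ minPart l

def OddlySuperior (l m : Ptn) : Prop := ∃ k : ℕ, Odd k ∧ maxPart m ≤ k ∧ k ≤ minPart l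

/-- The parity required of marked parts in type `X`. -/
def markParity : PType → ℕ → Prop
  | PType.C, a => Even a
  | _, a => Odd a

/-- `(ν, η)` is a marked partition of type `X`, with underlying partition `λ = ν + η`. -/
def IsMarked (X : PType) (nu eta : Ptn) : Prop :=
  InP X (nu + eta) ∧ sumParity X (nu + eta).sum ∧
  (∀ a ∈ nu, nu.count a = 1 ∧ markParity X a) ∧
  ((X = PType.B ∨ X = PType.D) → Even (Multiset.card nu))

/-- The Sommers duality map `d_S` on marked partitions `(ν, η)`. -/
noncomputable def dS (X : PType) (nu eta : Ptn) : Ptn :=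
  match X with
  | PType.B => collapse PType.C (transpose (nu + collapse PType.C (down eta)))
  | PType.C => collapse PType.B (transpose (nu + collapse PType.B (up eta)))
  | PType.D =>
      collapse PType.D (transpose (nu + transpose (collapse PType.D (transpose eta))))

/-- `a` is a markable part of `l` in type `X`. -/
def Markable (X : PType) (l : Ptn) (a : ℕ) : Prop :=
  a ∈ l ∧ markParity X a ∧
    (match X with
     | PType.B => Odd (height l a)
     | PType.C => Even (height l a)
     | PType.D => Even (height l a))

/-- The marked partition `⟨l, ν⟩` is reduced. -/
def Reduced (X : PType) (l nu : Ptn) : Prop := ∀ a ∈ nu, Markable X l a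

/-- The parts entering the definition of a special marked partition:
even of odd height (B), odd of even height (C), even of even height (D). -/
def AntiPart (X : PType) (l : Ptn) (a : ℕ) : Prop :=
  match X with
  | PType.B => Even a ∧ Odd (height l a)
  | PType.C => Odd a ∧ Even (height l a)
  | PType.D => Even a ∧ Even (height l a)

/-- The reduced marked partition `⟨l, ν⟩` is special. -/
def SpecialMP (X : PType) (l nu : Ptn) : Prop :=
  ∀ a ∈ l, AntiPart X l a → Even (height nu a)

/-- `a` is the largest part of `l` whose height satisfies `P`. -/
def LargestWith (l : Ptn) (P : ℕ → Prop) (a : ℕ) : Prop :=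
  a ∈ l ∧ P (height l a) ∧ ∀ b ∈ l, P (height l b) → b ≤ a

/-- Height parity for the top marked part in a basic block. -/
def heightParity : PType → ℕ → Prop
  | PType.B => fun n => Odd n
  | _ => fun n => Even n

/-- A basic block of type `X`. -/
def BasicBlock (X : PType) (nu eta : Ptn) : Prop :=
  IsMarked X nu eta ∧
  ((∃ n1 n2 : ℕ, n1 < n2 ∧ nu = {n2, n1} ∧ n1 = minPart (nu + eta) ∧
      LargestWith (nu + eta) (heightParity X) n2) ∨
   (X = PType.C ∧ ∃ n2 : ℕ, nu = {n2} ∧ LargestWith (nu + eta) (heightParity X) n2))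

/-- An ultrabasic block: a basic block with `n₁ ≤ 1`. -/
def Ultrabasic (X : PType) (nu eta : Ptn) : Prop :=
  BasicBlock X nu eta ∧ (Multiset.card nu = 2 → minPart nu ≤ 1)

/-!
Write `E_l(c) = ∑ₓ (x - c)⁺` for the excess of `l` over `c`. The functions `psum l` and `E_l` are
Legendre dual, so dominance is the pointwise order on excesses, and transposition exchanges the
two functions up to complementation in `|l|`. A partition lies in `𝒫_X` iff its excess is even at
every `c` of the parity left free by `X`, so the excess of the `X`-collapse of `l` is the greatest
convex function below `E_l` with this parity property.

Partial specialization at `a` raises the excess by one at `a` and changes nothing else. If `ζ ≰ λ'`,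
then `λ` and `λ'` have the same excess at `a`. Consequently `a` is also an anti-part of `λ'`, and an
even number of marks of `λ'` are `≥ a`. But whether the `a`-th partial sum of `d_S⟨λ,ν⟩` reaches the
value determined by `|λ|` and `E_λ(a)` depends exactly on the parity of the number of marks `≥ a`:
it does for `λ'` and does not for `λ`, contradicting `d_S⟨λ',ν'⟩ ≤ d_S⟨λ,ν⟩`.
-/

section HeightExcess

open Finset

/-- The total amount by which the parts of `l` exceed `c`, that is, the number of boxes of the Young
diagram of `l` beyond column `c`. As a function of `c` it is the Legendre dual of `psum l`. -/
def excess (l : Ptn) (c : ℕ) : ℕ := (l.map (· - c)).sum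

variable (l m : Ptn) (a c N : ℕ)

lemma height_zero : height 0 a = 0 := rfl

lemma height_cons (x : ℕ) : height (x ::ₘ l) a = height l a + if a ≤ x then 1 else 0 := by
  unfold height
  rw [Multiset.filter_cons]
  split_ifs <;> simp [add_comm]

lemma height_antitone : Antitone (height l) := fun _ _ h =>
  Multiset.card_le_card (Multiset.monotone_filter_right _ fun _ hx => h.trans hx)

lemma height_of_sum_lt {l : Ptn} {a : ℕ} (h : l.sum < a) : height l a = 0 := by
  rw [height, Multiset.card_eq_zero, Multiset.filter_eq_nil]
  exact fun x hx => ((Multiset.le_sum_of_mem hx).trans_lt h).not_ge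

lemma height_one {l : Ptn} (h : IsPartition l) : height l 1 = Multiset.card l :=
  congrArg Multiset.card (Multiset.filter_eq_self.2 h)

lemma height_eq_count_add : height l a = l.count a + height l (a + 1) := by
  induction l using Multiset.induction_on with
  | empty => simp [height_zero]
  | cons x l ih =>
    rw [height_cons, height_cons, Multiset.count_cons, ih]
    split_ifs <;> omega

@[simp] lemma excess_empty : excess 0 c = 0 := rfl

@[simp] lemma excess_cons (x : ℕ) : excess (x ::ₘ l) c = x - c + excess l c := by simp [excess]

@[simp] lemma excess_add : excess (l + m) c = excess l c + excess m c := by simp [excess]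

@[simp] lemma excess_replicate (n x : ℕ) :
    excess (Multiset.replicate n x) c = n * (x - c) := by simp [excess]

@[simp] lemma excess_zero : excess l 0 = l.sum := by simp [excess]

lemma excess_eq_height_add : excess l c = height l (c + 1) + excess l (c + 1) := by
  induction l using Multiset.induction_on with
  | empty => simp [height_zero]
  | cons x l ih =>
    rw [excess_cons, excess_cons, height_cons, ih]
    split_ifs <;> omega

lemma two_mul_excess_le : 2 * excess l (c + 1) ≤ excess l c + excess l (c + 2) := by
  have hc := excess_eq_height_add l c
  have hc' := excess_eq_height_add l (c + 1)
  have := height_antitone l (c + 1).le_succ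
  grind

variable {c N} in
lemma excess_eq_sum_add (h : c ≤ N) :
    excess l c = ∑ i ∈ Ico c N, height l (i + 1) + excess l N := by
  induction N, h using Nat.le_induction with
  | base => simp
  | succ N h ih => rw [ih, sum_Ico_succ_top h, excess_eq_height_add l N, add_assoc]

variable {l N} in
lemma excess_of_sum_le (h : l.sum ≤ N) : excess l N = 0 := by
  refine Multiset.sum_eq_zero fun y hy => ?_
  obtain ⟨x, hx, rfl⟩ := Multiset.mem_map.1 hy
  exact Nat.sub_eq_zero_of_le ((Multiset.le_sum_of_mem hx).trans h)

end HeightExcess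

section LegendreDuality

open Finset

variable (l : Ptn) (c j : ℕ)

lemma sum_Icc_one_eq_sum_range (f : ℕ → ℕ) (n : ℕ) :
    ∑ a ∈ Icc 1 n, f a = ∑ i ∈ range n, f (i + 1) := by
  rw [range_eq_Ico, sum_Ico_add' f 0 n 1]
  rfl

lemma psum_eq_sum_range {l : Ptn} {N : ℕ} (h : l.sum ≤ N) :
    psum l j = ∑ i ∈ range N, min j (height l (i + 1)) := by
  rw [psum, sum_Icc_one_eq_sum_range]
  refine sum_subset (range_subset_range.2 h) fun i _ hi => ?_
  rw [height_of_sum_lt (by simpa [Nat.lt_succ_iff] using hi), Nat.min_zero]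

lemma psum_eq_sum_range_add :
    psum l j = ∑ i ∈ range c, min j (height l (i + 1))
      + ∑ i ∈ Ico c (l.sum + c), min j (height l (i + 1)) := by
  rw [psum_eq_sum_range j (Nat.le_add_right l.sum c), sum_range_add_sum_Ico _ (by omega)]

lemma excess_eq_sum_Ico : excess l c = ∑ i ∈ Ico c (l.sum + c), height l (i + 1) := by
  rw [excess_eq_sum_add l (Nat.le_add_left c l.sum), excess_of_sum_le (by omega), add_zero]

lemma psum_le_excess_add : psum l j ≤ excess l c + j * c := by
  rw [psum_eq_sum_range_add l c, excess_eq_sum_Ico, add_comm]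
  gcongr
  · exact min_le_right _ _
  · calc ∑ i ∈ range c, min j (height l (i + 1)) ≤ ∑ _i ∈ range c, j := by
          gcongr; exact min_le_left _ _
      _ = j * c := by simp [mul_comm]

variable {l c j} in
lemma psum_eq_excess_add (hj : height l (c + 1) ≤ j) (hc : ∀ i < c, j ≤ height l (i + 1)) :
    psum l j = excess l c + j * c := by
  have hsmall : ∑ i ∈ range c, min j (height l (i + 1)) = ∑ _i ∈ range c, j :=
    sum_congr rfl fun i hi => min_eq_left (hc i (mem_range.1 hi))
  have hlarge : ∀ i ∈ Ico c (l.sum + c), min j (height l (i + 1)) = height l (i + 1) :=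
    fun i hi => min_eq_right ((height_antitone l (by grind)).trans hj)
  rw [psum_eq_sum_range_add l c, hsmall, sum_congr rfl hlarge, excess_eq_sum_Ico, add_comm]
  simp [mul_comm]

lemma psum_height : psum l (height l (c + 1)) = excess l c + height l (c + 1) * c :=
  psum_eq_excess_add le_rfl fun _ hi => height_antitone l (by omega)

lemma exists_psum_eq_excess_add : ∃ c, psum l j = excess l c + j * c := by
  have hex : ∃ c, height l (c + 1) ≤ j := ⟨l.sum, by simp [height_of_sum_lt]⟩
  exact ⟨Nat.find hex, psum_eq_excess_add (Nat.find_spec hex)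
    fun i hi => (not_le.1 (Nat.find_min hex hi)).le⟩

lemma dom_iff_excess_le {l m : Ptn} : Dom l m ↔ excess l ≤ excess m := by
  constructor
  · intro h c
    have hpsum := h (height l (c + 1))
    rw [psum_height] at hpsum
    exact Nat.le_of_add_le_add_right (hpsum.trans (psum_le_excess_add m c _))
  · intro h j
    obtain ⟨c, hc⟩ := exists_psum_eq_excess_add m j
    exact hc ▸ (psum_le_excess_add l c j).trans (Nat.add_le_add_right (h c) _)

end LegendreDuality

section Transpose

open Finset

variable (l m : Ptn) (c j : ℕ)

lemma excess_transpose_add_psum : excess (transpose l) j + psum l j = l.sum := by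
  have hfilter (s : Ptn) : excess (s.filter (0 < ·)) j = excess s j := by
    induction s using Multiset.induction_on with
    | empty => rfl
    | cons x s ih =>
      rw [Multiset.filter_cons, excess_add, ih, excess_cons]
      split_ifs with hx
      · simp [excess]
      · simp [Nat.eq_zero_of_not_pos hx]
  calc excess (transpose l) j + psum l j
      = ∑ a ∈ Icc 1 l.sum, (height l a - j) + psum l j := by
        rw [transpose, hfilter, excess, Multiset.map_map]; rfl
    _ = ∑ a ∈ Icc 1 l.sum, height l a := by
        rw [psum, ← sum_add_distrib]
        exact sum_congr rfl fun _ _ => by omega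
    _ = l.sum := by
        rw [sum_Icc_one_eq_sum_range, range_eq_Ico]
        exact (excess_eq_sum_Ico l 0).symm.trans (excess_zero l)

@[simp] lemma sum_transpose : (transpose l).sum = l.sum := by
  simpa [psum] using excess_transpose_add_psum l 0

lemma psum_transpose_add_excess : psum (transpose l) c + excess l c = l.sum := by
  apply le_antisymm
  · have := psum_le_excess_add (transpose l) (height l (c + 1)) c
    have := excess_transpose_add_psum l (height l (c + 1))
    have := psum_height l c
    have := mul_comm c (height l (c + 1))
    omega
  · obtain ⟨j, hj⟩ := exists_psum_eq_excess_add (transpose l) c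
    have := excess_transpose_add_psum l j
    have := psum_le_excess_add l c j
    have := mul_comm c j
    omega

lemma psum_transpose_transpose : psum (transpose (transpose l)) c = psum l c := by
  have := psum_transpose_add_excess (transpose l) c
  have := excess_transpose_add_psum l c
  have := sum_transpose l
  omega

lemma psum_transpose_add :
    psum (transpose (l + m)) c = psum (transpose l) c + psum (transpose m) c := by
  have hlm := psum_transpose_add_excess (l + m) c
  rw [excess_add, Multiset.sum_add] at hlm
  have := psum_transpose_add_excess l c
  have := psum_transpose_add_excess m c
  omega

end Transpose

section Parity

/-- The parity of the parts whose multiplicity is unrestricted in `𝒫_X`. -/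
def freeParity : PType → ℕ
  | PType.C => 0
  | _ => 1

lemma badPart_iff {X : PType} {a : ℕ} : badPart X a ↔ Odd (a + freeParity X) := by
  cases X <;> simp [badPart, freeParity, Nat.odd_add_one]

lemma markParity_iff {X : PType} {a : ℕ} : markParity X a ↔ Even (a + freeParity X) := by
  cases X <;> simp [markParity, freeParity, Nat.even_add_one]

lemma even_excess {l : Ptn} {c : ℕ} (h : ∀ x ∈ l, Odd (l.count x) → Even (x + c)) :
    Even (excess l c) := by
  rw [excess, Finset.sum_multiset_map_count]
  refine Finset.even_sum _ fun x hx => ?_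
  rw [smul_eq_mul, Nat.even_mul]
  rcases Nat.even_or_odd (l.count x) with hcount | hcount
  · exact .inl hcount
  · have := h x (Multiset.mem_toFinset.1 hx) hcount
    grind

lemma inP_iff_even_excess {X : PType} {l : Ptn} :
    InP X l ↔ IsPartition l ∧ ∀ c, Even (c + freeParity X) → Even (excess l c) := by
  refine and_congr_right fun hl => ⟨fun h c hc => even_excess fun x _ hx => ?_, fun h a ha => ?_⟩
  · have : ¬ Odd (x + freeParity X) := fun hbad =>
      (Nat.not_even_iff_odd.2 hx) (h x (badPart_iff.2 hbad))
    grind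
  · rw [badPart_iff] at ha
    cases a with
    | zero => simp [Multiset.count_eq_zero_of_notMem fun h0 => (hl 0 h0).false]
    | succ c =>
      have hlow := h c (by grind)
      have hhigh := h (c + 2) (by grind)
      have := excess_eq_height_add l c
      have := excess_eq_height_add l (c + 1)
      have := height_eq_count_add l (c + 1)
      grind

lemma InP.even_excess_add_height {X : PType} {l : Ptn} (hl : InP X l) {a : ℕ} (ha : badPart X a)
    (hpos : 0 < a) : Even (excess l a + height l a) := by
  obtain ⟨c, rfl⟩ := Nat.exists_eq_add_one.2 hpos
  rw [add_comm, ← excess_eq_height_add]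
  rw [badPart_iff] at ha
  exact (inP_iff_even_excess.1 hl).2 c (by grind)

end Parity

section ParityConvex

/-- Convex functions on `ℕ` with even values at the arguments congruent to `e` modulo `2`. The
excess functions of the partitions in `𝒫_X` are such functions, with `e = freeParity X`. -/
structure ParityConvex (e : ℕ) (g : ℕ → ℕ) : Prop where
  convex : ∀ c, 2 * g (c + 1) ≤ g c + g (c + 2)
  even : ∀ c, Even (c + e) → Even (g c)

lemma InP.parityConvex_excess {X : PType} {l : Ptn} (hl : InP X l) :
    ParityConvex (freeParity X) (excess l) :=
  ⟨two_mul_excess_le l, (inP_iff_even_excess.1 hl).2⟩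

lemma parityConvex_sub_mul {e t j : ℕ} (h : Even (t + e * j)) :
    ParityConvex e fun c => t - j * c where
  convex c := by
    have := mul_add_one j c
    have := mul_add j c 2
    omega
  even c hc := by
    have : Even (t + j * c) := by grind
    grind

lemma exists_isGreatest_parityConvex (e : ℕ) (f : ℕ → ℕ) :
    ∃ F, IsGreatest {g | ParityConvex e g ∧ g ≤ f} F := by
  let values (c : ℕ) : Set ℕ := {x | ∃ g, ParityConvex e g ∧ g ≤ f ∧ g c = x}
  have hbdd (c : ℕ) : BddAbove (values c) := ⟨f c, by rintro _ ⟨g, -, hg, rfl⟩; exact hg c⟩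
  have hle {g : ℕ → ℕ} (hg : ParityConvex e g) (hgf : g ≤ f) (c : ℕ) : g c ≤ sSup (values c) :=
    le_csSup (hbdd c) ⟨g, hg, hgf, rfl⟩
  have hattained (c : ℕ) : sSup (values c) ∈ values c :=
    Nat.sSup_mem ⟨0, 0, ⟨by simp, by simp⟩, fun _ => Nat.zero_le _, rfl⟩ (hbdd c)
  refine ⟨fun c => sSup (values c), ⟨⟨fun c => ?_, fun c hc => ?_⟩, fun c => ?_⟩,
    fun g hg => hle hg.1 hg.2⟩
  · obtain ⟨g, hg, hgf, hgc⟩ := hattained (c + 1)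
    calc 2 * sSup (values (c + 1)) = 2 * g (c + 1) := by rw [hgc]
      _ ≤ g c + g (c + 2) := hg.convex c
      _ ≤ _ := add_le_add (hle hg hgf c) (hle hg hgf (c + 2))
  · obtain ⟨g, hg, -, hgc⟩ := hattained c
    exact hgc ▸ hg.even c hc
  · obtain ⟨g, -, hgf, hgc⟩ := hattained c
    exact hgc.symm.trans_le (hgf c)

lemma exists_excess_eq {F : ℕ → ℕ} (hF : ∀ c, 2 * F (c + 1) ≤ F c + F (c + 2)) {N : ℕ}
    (hN : ∀ c, N ≤ c → F c = 0) : ∃ m : Ptn, IsPartition m ∧ excess m = F := by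
  induction N generalizing F with
  | zero => exact ⟨0, by simp [IsPartition], funext fun c => by simp [hN c (Nat.zero_le c)]⟩
  | succ N ih =>
    obtain ⟨m, hm, hmF⟩ := ih (F := fun c => F (c + 1)) (fun c => hF (c + 1))
      fun c hc => hN (c + 1) (by omega)
    have hexcess (c : ℕ) : excess m c = F (c + 1) := congrFun hmF c
    have hcard : F 1 + Multiset.card m ≤ F 0 := by
      have hconvex : 2 * F 1 ≤ F 0 + F 2 := hF 0
      have hheight : F 1 = Multiset.card m + F 2 := by
        rw [← height_one hm, ← hexcess 0, ← hexcess 1]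
        exact excess_eq_height_add m 0
      omega
    have hshift (c : ℕ) : excess (m.map (· + 1)) (c + 1) = excess m c := by simp [excess]
    refine ⟨m.map (· + 1) + Multiset.replicate (F 0 - F 1 - Multiset.card m) 1, ?_, ?_⟩
    · simp only [IsPartition, Multiset.mem_add, Multiset.mem_map, Multiset.mem_replicate]
      grind
    · funext c
      cases c with
      | zero =>
        have : m.sum = F 1 := by simpa using hexcess 0
        simp only [excess_zero, Multiset.sum_add, Multiset.sum_map_add, Multiset.map_id',
          Multiset.map_const', Multiset.sum_replicate, smul_eq_mul, mul_one, this]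
        omega
      | succ c => simp [hshift, hexcess]

end ParityConvex

section Collapse

variable {X : PType} {l : Ptn} {c : ℕ}

lemma exists_isCollapse (hl : X = PType.C → Even l.sum) :
    ∃ m, IsCollapse X l m ∧
      IsGreatest {g | ParityConvex (freeParity X) g ∧ g ≤ excess l} (excess m) := by
  obtain ⟨F, ⟨hF, hFl⟩, hgreatest⟩ := exists_isGreatest_parityConvex (freeParity X) (excess l)
  obtain ⟨m, hm, rfl⟩ := exists_excess_eq hF.convex (N := l.sum) fun c hc =>
    Nat.eq_zero_of_le_zero ((hFl c).trans_eq (excess_of_sum_le hc))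
  have hsum : m.sum = l.sum := by
    have hline : ParityConvex (freeParity X) fun c => l.sum - l.sum * c :=
      parityConvex_sub_mul (by cases X <;> simp_all [freeParity])
    have hle : (fun c => l.sum - l.sum * c) ≤ excess l := by
      rintro (_ | c)
      · simp
      · simp [mul_add_one]
    have h0 := hgreatest ⟨hline, hle⟩ 0
    have h0' := hFl 0
    simp only [mul_zero, tsub_zero, excess_zero] at h0 h0'
    omega
  exact ⟨m, ⟨inP_iff_even_excess.2 ⟨hm, hF.even⟩, hsum, dom_iff_excess_le.2 hFl,
    fun ν hν _ hνl => dom_iff_excess_le.2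
      (hgreatest ⟨hν.parityConvex_excess, dom_iff_excess_le.1 hνl⟩)⟩, ⟨hF, hFl⟩, hgreatest⟩

lemma isCollapse_collapse (hl : X = PType.C → Even l.sum) : IsCollapse X l (collapse X l) := by
  have hdef : CollapseDefined X l := (exists_isCollapse hl).imp fun _ => And.left
  rw [collapse, dif_pos hdef]
  exact hdef.choose_spec

lemma sum_collapse (hl : X = PType.C → Even l.sum) : (collapse X l).sum = l.sum :=
  (isCollapse_collapse hl).2.1

lemma psum_collapse_le (hl : X = PType.C → Even l.sum) (j : ℕ) :
    psum (collapse X l) j ≤ psum l j :=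
  (isCollapse_collapse hl).2.2.1 j

lemma even_excess_collapse (hl : X = PType.C → Even l.sum) (hc : Even (c + freeParity X)) :
    Even (excess (collapse X l) c) :=
  (isCollapse_collapse hl).1.parityConvex_excess.even c hc

lemma ParityConvex.le_excess_collapse (hl : X = PType.C → Even l.sum) {g : ℕ → ℕ}
    (hg : ParityConvex (freeParity X) g) (hgl : g ≤ excess l) : g ≤ excess (collapse X l) := by
  obtain ⟨m, ⟨hm, hsum, hml, -⟩, hgreatest⟩ := exists_isCollapse hl
  exact (hgreatest.2 ⟨hg, hgl⟩).trans
    (dom_iff_excess_le.1 ((isCollapse_collapse hl).2.2.2 m hm hsum hml))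

-- The affine function `c ↦ t - j * c` lies below `excess l` exactly when `t ≤ psum l j`.
lemma le_psum_collapse (hl : X = PType.C → Even l.sum) {t j : ℕ} (ht : t ≤ psum l j)
    (hparity : Even (t + freeParity X * j)) : t ≤ psum (collapse X l) j := by
  have hline : (fun c => t - j * c) ≤ excess l := fun c => by
    have := psum_le_excess_add l c j
    change t - j * c ≤ excess l c
    omega
  obtain ⟨c, hc⟩ := exists_psum_eq_excess_add (collapse X l) j
  have : t - j * c ≤ _ := (parityConvex_sub_mul hparity).le_excess_collapse hl hline c
  omega

lemma excess_collapse (hl : X = PType.C → Even l.sum) (hc : Even (c + freeParity X)) :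
    excess (collapse X l) c = 2 * (excess l c / 2) := by
  apply le_antisymm
  · have hle := dom_iff_excess_le.1 (isCollapse_collapse hl).2.2.1 c
    have heven := even_excess_collapse hl hc
    grind
  · have htangent : 2 * (excess l c / 2) + height l (c + 1) * c
        ≤ psum (collapse X l) (height l (c + 1)) := by
      refine le_psum_collapse hl ?_ ?_
      · rw [psum_height]; omega
      · rw [add_assoc, mul_comm (freeParity X), ← mul_add]
        exact (even_two_mul _).add (hc.mul_left _)
    have := psum_le_excess_add (collapse X l) c (height l (c + 1))
    omega

end Collapse

section UpDown

open Finset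

variable {l : Ptn} {a : ℕ}

lemma minPart_mem (ha : a ∈ l) : minPart l ∈ l := Nat.sInf_mem (s := {x | x ∈ l}) ⟨a, ha⟩

lemma minPart_le (ha : a ∈ l) : minPart l ≤ a := Nat.sInf_le ha

lemma maxPart_mem (ha : a ∈ l) : maxPart l ∈ l := by
  obtain ⟨x, hx, hsup⟩ := exists_mem_eq_sup l.toFinset ⟨a, Multiset.mem_toFinset.2 ha⟩ id
  have hmax : maxPart l = x := by simpa [sup_def, maxPart] using hsup
  exact hmax ▸ Multiset.mem_toFinset.1 hx

lemma sum_down (hp : IsPartition l) (ha : a ∈ l) : (down l).sum + 1 = l.sum := by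
  have hpos := hp _ (minPart_mem ha)
  have hsum := Multiset.sum_erase (minPart_mem ha)
  unfold down
  split_ifs
  · omega
  · rw [Multiset.sum_cons]
    omega

lemma excess_down (ha : a ∈ l) : excess (down l) a = excess l a := by
  have hle := minPart_le ha
  have hexcess := congrArg (excess · a) (Multiset.cons_erase (minPart_mem ha))
  unfold down
  split_ifs <;> simp only [excess_cons] at * <;> omega

lemma sum_up (ha : a ∈ l) : (up l).sum = l.sum + 1 := by
  have hsum := Multiset.sum_erase (maxPart_mem ha)
  rw [up, Multiset.sum_cons]
  omega

lemma excess_up (ha : a ∈ l) : excess (up l) a = excess l a + 1 := by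
  have hle : a ≤ maxPart l := Multiset.le_sup ha
  have hexcess := congrArg (excess · a) (Multiset.cons_erase (maxPart_mem ha))
  rw [up, excess_cons]
  simp only [excess_cons] at hexcess
  omega

end UpDown

section SommersDual

/-- The type in which `d_S` takes its values on marked partitions of a given type. -/
def PType.dual : PType → PType
  | PType.B => PType.C
  | PType.C => PType.B
  | PType.D => PType.D

/-- The partition that `d_S` adjoins to the marks before transposing: `(η⁻)_C`, `(η⁺)_B` and
`((η*)_D)*` in types `B`, `C` and `D`. -/
noncomputable def residue (X : PType) (eta : Ptn) : Ptn :=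
  match X with
  | PType.B => collapse PType.C (down eta)
  | PType.C => collapse PType.B (up eta)
  | PType.D => transpose (collapse PType.D (transpose eta))

/-- The largest possible increase of the partial sums of `η*` at indices in `η` when `η` is replaced
by its residue; only in type `C` does the residue have larger sum than `η`. -/
def residueGain : PType → ℕ
  | PType.C => 1
  | _ => 0

lemma dS_eq_collapse (X : PType) (nu eta : Ptn) :
    dS X nu eta = collapse X.dual (transpose (nu + residue X eta)) := by
  cases X <;> rfl

variable {X : PType} {eta : Ptn} {a : ℕ}

lemma even_sum_residue (hX : X.dual = PType.C) (hp : IsPartition eta) (ha : a ∈ eta)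
    (hsum : sumParity X eta.sum) : Even (residue X eta).sum := by
  cases X <;> simp only [PType.dual, reduceCtorEq] at hX
  have hdown : Even (down eta).sum := by
    have := sum_down hp ha
    simp only [sumParity] at hsum
    grind
  simpa only [residue, sum_collapse fun _ => hdown] using hdown

lemma exists_odd_psum_transpose_eq (ha : a ∈ eta) :
    ∃ j, Odd j ∧ psum (transpose eta) a = excess (transpose eta) j + a * j := by
  obtain ⟨j, hj, hodd⟩ : ∃ j ∈ Set.Icc (height eta (a + 1)) (height eta a), Odd j := by
    have := height_eq_count_add eta a
    have := Multiset.count_pos.2 ha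
    by_cases h : Odd (height eta a)
    · exact ⟨height eta a, ⟨by omega, le_rfl⟩, h⟩
    · exact ⟨height eta a - 1, ⟨by omega, by omega⟩, by grind⟩
  refine ⟨j, hodd, ?_⟩
  have hpsum : psum eta j = excess eta a + j * a :=
    psum_eq_excess_add hj.1 fun i hi => hj.2.trans (height_antitone eta hi)
  have := excess_transpose_add_psum eta j
  have := psum_transpose_add_excess eta a
  have := mul_comm a j
  omega

lemma psum_collapse_transpose_lt (ha : a ∈ eta) (heven : Even a)
    (hodd : Odd (psum (transpose eta) a)) :
    psum (collapse PType.D (transpose eta)) a < psum (transpose eta) a := by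
  obtain ⟨j, hj, heq⟩ := exists_odd_psum_transpose_eq ha
  have hD : PType.D = PType.C → Even (transpose eta).sum := nofun
  have hle := psum_le_excess_add (collapse PType.D (transpose eta)) j a
  rw [excess_collapse hD hj.add_one] at hle
  have : Odd (excess (transpose eta) j) := by
    have := heven.mul_right j
    grind
  grind

lemma psum_transpose_residue_B (hp : IsPartition eta) (ha : a ∈ eta) (heven : Even a)
    (hsum : Odd eta.sum) : psum (transpose eta) a ≤ psum (transpose (residue PType.B eta)) a ↔
      Even (psum (transpose eta) a) := by
  have hdown := sum_down hp ha
  have hdown_even : PType.C = PType.C → Even (down eta).sum := fun _ => by grind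
  have hsum_residue := sum_collapse hdown_even
  have hexcess := excess_collapse hdown_even (c := a) (by simpa [freeParity])
  have := psum_transpose_add_excess eta a
  have := psum_transpose_add_excess (residue PType.B eta) a
  rw [excess_down ha] at hexcess
  simp only [residue] at *
  grind

lemma psum_transpose_residue_C (ha : a ∈ eta) (hodd : Odd a) (hsum : Even eta.sum) :
    psum (transpose eta) a + 1 ≤ psum (transpose (residue PType.C eta)) a ↔
      Even (psum (transpose eta) a) := by
  have hup := sum_up ha
  have hB : PType.B = PType.C → Even (up eta).sum := nofun
  have hsum_residue := sum_collapse hB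
  have hexcess := excess_collapse hB (c := a) (by simpa [freeParity, Nat.even_add_one])
  have := psum_transpose_add_excess eta a
  have := psum_transpose_add_excess (residue PType.C eta) a
  rw [excess_up ha] at hexcess
  simp only [residue] at *
  grind

lemma psum_transpose_residue_D (ha : a ∈ eta) (heven : Even a) :
    psum (transpose eta) a ≤ psum (transpose (residue PType.D eta)) a ↔
      Even (psum (transpose eta) a) := by
  rw [residue, psum_transpose_transpose]
  constructor
  · contrapose!
    exact fun hodd => psum_collapse_transpose_lt ha heven (Nat.not_even_iff_odd.1 hodd)
  · intro h
    exact le_psum_collapse (by nofun) le_rfl (by simpa [freeParity] using h.add heven)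

lemma psum_transpose_residue (hp : IsPartition eta) (ha : a ∈ eta) (hbad : badPart X a)
    (hsum : sumParity X eta.sum) :
    psum (transpose eta) a + residueGain X ≤ psum (transpose (residue X eta)) a ↔
      Even (psum (transpose eta) a) := by
  cases X with
  | B => exact psum_transpose_residue_B hp ha hbad hsum
  | C => exact psum_transpose_residue_C ha hbad hsum
  | D => exact psum_transpose_residue_D ha hbad

end SommersDual

section Marked

variable {X : PType} {nu eta : Ptn} {a : ℕ}

lemma AntiPart.badPart {l : Ptn} (h : AntiPart X l a) : badPart X a := by
  cases X <;> exact h.1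

lemma AntiPart.congr_excess {l m : Ptn} (hl : InP X l) (hm : InP X m)
    (h : AntiPart X l a) (hpos : 0 < a) (hexcess : excess l a = excess m a) :
    AntiPart X m a := by
  have := hl.even_excess_add_height h.badPart hpos
  have := hm.even_excess_add_height h.badPart hpos
  cases X <;> exact ⟨h.1, by have := h.2; grind⟩

lemma AntiPart.even_psum_transpose {l : Ptn} (h : AntiPart X l a) (hl : InP X l)
    (hsum : sumParity X l.sum) (hpos : 0 < a) : Even (psum (transpose l) a) := by
  have := hl.even_excess_add_height h.badPart hpos
  have := psum_transpose_add_excess l a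
  cases X <;> have := h.2 <;> simp only [sumParity] at hsum <;> grind

lemma IsMarked.even_add_freeParity (h : IsMarked X nu eta) : ∀ x ∈ nu, Even (x + freeParity X) :=
  fun x hx => markParity_iff.1 (h.2.2.1 x hx).2

lemma IsMarked.isPartition (h : IsMarked X nu eta) : IsPartition (nu + eta) := h.1.1

lemma IsMarked.even_sum_marks (h : IsMarked X nu eta) : Even nu.sum := by
  have hexcess : Even (excess nu (freeParity X)) :=
    even_excess fun x hx _ => h.even_add_freeParity x hx
  by_cases hC : X = PType.C
  · simpa [hC, freeParity] using hexcess
  · have hX : X = PType.B ∨ X = PType.D := by cases X <;> simp_all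
    have hone : freeParity X = 1 := by cases X <;> simp_all [freeParity]
    rw [hone] at hexcess
    rw [← excess_zero, excess_eq_height_add, zero_add,
      height_one fun x hx => h.isPartition x (Multiset.mem_add.2 (.inl hx))]
    exact (h.2.2.2 hX).add hexcess

lemma IsMarked.sumParity_unmarked (h : IsMarked X nu eta) : sumParity X eta.sum := by
  have hsum := h.2.1
  have := h.even_sum_marks
  rw [Multiset.sum_add] at hsum
  cases X <;> simp only [sumParity] at * <;> grind

lemma IsMarked.even_psum_transpose_marks_iff (h : IsMarked X nu eta) (hbad : badPart X a)
    (hpos : 0 < a) : Even (psum (transpose nu) a) ↔ Even (height nu a) := by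
  obtain ⟨c, rfl⟩ := Nat.exists_eq_add_one.2 hpos
  have hexcess : Even (excess nu c) := even_excess fun x hx _ => by
    have := h.even_add_freeParity x hx
    have := badPart_iff.1 hbad
    grind
  have := excess_eq_height_add nu c
  have := psum_transpose_add_excess nu (c + 1)
  have := h.even_sum_marks
  grind

lemma IsMarked.mem_unmarked (h : IsMarked X nu eta) (hbad : badPart X a) (ha : a ∈ nu + eta) :
    a ∈ eta :=
  (Multiset.mem_add.1 ha).resolve_left fun hnu =>
    Nat.not_even_iff_odd.2 (badPart_iff.1 hbad) (h.even_add_freeParity a hnu)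

lemma badPart.even_residueGain_add (hbad : badPart X a) :
    Even (residueGain X + freeParity X.dual * a) := by
  cases X <;> simp_all [badPart, residueGain, freeParity, PType.dual, add_comm 1]

lemma IsMarked.le_psum_dS_iff (h : IsMarked X nu eta) (ha : a ∈ nu + eta)
    (hanti : AntiPart X (nu + eta) a) :
    psum (transpose (nu + eta)) a + residueGain X ≤ psum (dS X nu eta) a ↔
      Even (height nu a) := by
  have hpos : 0 < a := h.isPartition a ha
  have hbad := hanti.badPart
  have hmem := h.mem_unmarked hbad ha
  have hp : IsPartition eta := fun x hx => h.isPartition x (Multiset.mem_add.2 (.inr hx))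
  have hdual : X.dual = PType.C → Even (transpose (nu + residue X eta)).sum := fun hX => by
    rw [sum_transpose, Multiset.sum_add]
    exact h.even_sum_marks.add (even_sum_residue hX hp hmem h.sumParity_unmarked)
  have htotal := hanti.even_psum_transpose h.1 h.2.1 hpos
  have hresidue := psum_transpose_residue hp hmem hbad h.sumParity_unmarked
  have hupper := psum_collapse_le hdual a
  rw [psum_transpose_add] at htotal hupper ⊢
  rw [dS_eq_collapse, ← h.even_psum_transpose_marks_iff hbad hpos]
  constructor
  · intro hle
    have := hresidue.1 (by omega)
    grind
  · intro heven
    have := hresidue.2 (by grind)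
    apply le_psum_collapse hdual
    · rw [psum_transpose_add]
      omega
    · rw [add_assoc]
      exact htotal.add hbad.even_residueGain_add

end Marked

section PartialSpecialization

/-- Replaces two copies of the part `a` of `l` by `a + 1` and `a - 1`, where a part `0` is
dropped. It is meant for parts of multiplicity at least two. -/
def partialSpecialization (l : Ptn) (a : ℕ) : Ptn :=
  ((a + 1) ::ₘ (Multiset.replicate (l.count a - 2) a + (if a ≤ 1 then (0 : Ptn) else {a - 1})))
    + Multiset.filter (fun b => b ≠ a) l

variable {l m : Ptn} {a : ℕ}

lemma excess_partialSpecialization (hpos : 0 < a) (hcount : 2 ≤ l.count a) (c : ℕ) :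
    excess (partialSpecialization l a) c = excess l c + if c = a then 1 else 0 := by
  obtain ⟨n, hn⟩ := Nat.exists_eq_add_of_le hcount
  have hsplit : excess l c = l.count a * (a - c) + excess (l.filter (· ≠ a)) c := by
    conv_lhs => rw [← Multiset.filter_add_not (· = a) l]
    rw [Multiset.filter_eq', excess_add, excess_replicate]
  have hlower : excess (if a ≤ 1 then (0 : Ptn) else {a - 1}) c = a - 1 - c := by
    split_ifs with h
    · rw [excess_empty]
      omega
    · simp [excess]
  rw [partialSpecialization, excess_add, excess_cons, excess_add, excess_replicate, hlower, hsplit,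
    hn, Nat.add_sub_cancel_left, add_mul]
  split_ifs <;> omega

lemma mem_of_excess_eq (hdom : Dom l m) (hpos : 0 < a) (hexcess : excess l a = excess m a)
    (ha : a ∈ l) : a ∈ m := by
  obtain ⟨c, rfl⟩ := Nat.exists_eq_add_one.2 hpos
  rw [dom_iff_excess_le] at hdom
  have hbelow : excess l c ≤ excess m c := hdom c
  have habove : excess l (c + 1 + 1) ≤ excess m (c + 1 + 1) := hdom (c + 1 + 1)
  rw [excess_eq_height_add l c, excess_eq_height_add m c] at hbelow
  have := excess_eq_height_add l (c + 1)
  have := excess_eq_height_add m (c + 1)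
  have := height_eq_count_add l (c + 1)
  have := height_eq_count_add m (c + 1)
  rw [← Multiset.count_pos] at ha ⊢
  omega

lemma InP.two_le_count {X : PType} (hl : InP X l) (hbad : badPart X a) (ha : a ∈ l) :
    2 ≤ l.count a := by
  have := hl.2 a hbad
  have := Multiset.count_pos.2 ha
  grind

end PartialSpecialization

theorem partial_specialization_le_special_general {X : PType} {nu eta nu' eta' : Ptn} {a : ℕ}
    (h : IsMarked X nu eta) (h' : IsMarked X nu' eta')
    (hsum : (nu + eta).sum = (nu' + eta').sum)
    (hdom : Dom (nu + eta) (nu' + eta'))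
    (hds : Dom (dS X nu' eta') (dS X nu eta))
    (hsp' : SpecialMP X (nu' + eta') nu')
    (ha : a ∈ nu + eta) (hanti : AntiPart X (nu + eta) a) (hodd : Odd (height nu a)) :
    Dom (partialSpecialization (nu + eta) a) (nu' + eta') := by
  have hpos : 0 < a := h.isPartition a ha
  have hcount := h.1.two_le_count hanti.badPart ha
  have hexcess := dom_iff_excess_le.1 hdom
  suffices hne : excess (nu + eta) a ≠ excess (nu' + eta') a by
    refine dom_iff_excess_le.2 fun c => ?_
    rw [excess_partialSpecialization hpos hcount]
    split_ifs with hc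
    · exact hc ▸ (hexcess a).lt_of_ne hne
    · exact hexcess c
  intro heq
  have ha' : a ∈ nu' + eta' := mem_of_excess_eq hdom hpos heq ha
  have hanti' : AntiPart X (nu' + eta') a := hanti.congr_excess h.1 h'.1 hpos heq
  have hpsum : psum (transpose (nu + eta)) a = psum (transpose (nu' + eta')) a := by
    have := psum_transpose_add_excess (nu + eta) a
    have := psum_transpose_add_excess (nu' + eta') a
    omega
  have hreach' := (h'.le_psum_dS_iff ha' hanti').2 (hsp' a ha' hanti')
  have hreach := (h.le_psum_dS_iff ha hanti).1 (hpsum ▸ hreach'.trans (hds a))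
  exact Nat.not_even_iff_odd.2 hodd hreach

/-- Lemma 5.10 of the paper: if `⟨λ,ν⟩ ≤ ⟨λ',ν'⟩` (i.e. `λ ≤ λ'` and
`d_S⟨λ,ν⟩ ≥ d_S⟨λ',ν'⟩`) with `⟨λ',ν'⟩` special and `⟨λ,ν⟩` nonspecial, then the
partition `ζ` produced by partial specialization at `⟨λ,ν⟩` still satisfies `ζ ≤ λ'`. -/
theorem partial_specialization_le_special (X : PType) (nu eta nu' eta' : Ptn)
    (a l : ℕ) (zeta : Ptn)
    (h : IsMarked X nu eta) (h' : IsMarked X nu' eta')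
    (hsum : (nu + eta).sum = (nu' + eta').sum)
    (hr : Reduced X (nu + eta) nu) (hr' : Reduced X (nu' + eta') nu')
    (hdom : Dom (nu + eta) (nu' + eta'))
    (hds : Dom (dS X nu' eta') (dS X nu eta))
    (hsp' : SpecialMP X (nu' + eta') nu')
    (hns : ¬ SpecialMP X (nu + eta) nu)
    (hC : X = PType.C → eta ≠ 0 ∧ eta' ≠ 0)
    (ha : a ∈ nu + eta ∧ AntiPart X (nu + eta) a ∧ Odd (height nu a) ∧
      ∀ b ∈ nu + eta, AntiPart X (nu + eta) b → Odd (height nu b) → a ≤ b)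
    (hl : l = (nu + eta).count a)
    (hzeta : zeta = ((a + 1) ::ₘ (Multiset.replicate (l - 2) a +
        (if a ≤ 1 then (0 : Ptn) else {a - 1}))) +
        Multiset.filter (fun b => b ≠ a) (nu + eta)) :
    Dom zeta (nu' + eta') := by
  subst hl hzeta
  exact partial_specialization_le_special_general h h' hsum hdom hds hsp' ha.1 ha.2.1 ha.2.2.1

end NilDual
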